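/- Let X be a geometric tree, T a generic cellular merge tree with leaves l₁,…,lₙ of values m₁,…,mₙ, and f:X→ℝ continuous with finitely many local minima. Then MT(f) ≅ T if and only if: (1) f has exactly n local minima X₁,…,Xₙ with values m₁,…,mₙ, and (2) for all i≠j, the maximum of f on the shortest path between X_i and X_j equals π(LCA(l_i,l_j)). -/

import Mathlib

open scoped Classical

noncomputable section

instance dartTop {V : Type*} (G : SimpleGraph V) : TopologicalSpace G.Dart := ⊥

/-- Gluing relation for the geometric realization of a graph: one copy of `[0,1]` per
oriented edge, opposite orientations identified by `t ↦ 1-t`, and starting points of edges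
with the same initial vertex identified. -/
def treeRel {V : Type*} (G : SimpleGraph V) :
    (G.Dart × ↥(Set.Icc (0:ℝ) 1)) → (G.Dart × ↥(Set.Icc (0:ℝ) 1)) → Prop :=
  fun p q =>
    (p.1 = q.1.symm ∧ (p.2 : ℝ) = 1 - (q.2 : ℝ)) ∨
    (p.1.toProd.1 = q.1.toProd.1 ∧ (p.2 : ℝ) = 0 ∧ (q.2 : ℝ) = 0)

/-- The geometric realization of a graph. -/
def TreeSpace {V : Type*} (G : SimpleGraph V) := Quot (treeRel G)

instance {V : Type*} (G : SimpleGraph V) : TopologicalSpace (TreeSpace G) :=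
  instTopologicalSpaceQuot
/-- Sublevel set of a function. -/
def sub {X : Type*} (f : X → ℝ) (t : ℝ) : Set X := {x | f x ≤ t}
/-- A local minimum of `f`: a connected set on which `f` is constant, such that every
connected set strictly containing it contains a point of strictly larger value. -/
def IsLocMin {X : Type*} [TopologicalSpace X] (f : X → ℝ) (M : Set X) : Prop :=
  IsConnected M ∧ (∃ c : ℝ, ∀ x ∈ M, f x = c) ∧
    ∀ M' : Set X, IsConnected M' → M ⊂ M' → ∃ x ∈ M', ∀ y ∈ M, f y < f x
/-- Combinatorial data for a cellular merge tree: a finite rooted tree with a real value at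
each node, strictly increasing towards the root; the root carries an infinite upward ray. -/
structure MergeTreeData where
  n : ℕ
  parent : Fin n → Fin n
  root : Fin n
  hroot : parent root = root
  hreach : ∀ v, ∃ k, parent^[k] v = root
  val : Fin n → ℝ
  hval : ∀ v, v ≠ root → val v < val (parent v)

namespace MergeTreeData

variable (d : MergeTreeData)

/-- Points of the edge attached below each node (for the root: the infinite upward ray). -/
def Carrier : Set (Fin d.n × ℝ) :=
  {p | d.val p.1 ≤ p.2 ∧ (p.1 ≠ d.root → p.2 ≤ d.val (d.parent p.1))}

/-- Glue the top of each edge to the bottom of the parent's edge. -/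
def glueRel : ↥d.Carrier → ↥d.Carrier → Prop := fun a b =>
  a.1.2 = b.1.2 ∧ d.parent a.1.1 = b.1.1 ∧ a.1.2 = d.val (d.parent a.1.1)

/-- The geometric realization of the cellular merge tree `d`. -/
def Space := Quot d.glueRel

instance : TopologicalSpace d.Space := instTopologicalSpaceQuot

/-- The gauge of the canonical cellular merge tree. -/
def gauge : d.Space → ℝ := Quot.lift (fun a => a.1.2) (fun _ _ h => h.1)

/-- `v` is a descendant of `w` (possibly `v = w`). -/
def Desc (v w : Fin d.n) : Prop := ∃ k, d.parent^[k] v = w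

def IsLeafNode (v : Fin d.n) : Prop := ∀ w, d.parent w = v → w = v

def IsBranchNode (v : Fin d.n) : Prop := 2 ≤ Nat.card {w : Fin d.n // d.parent w = v ∧ w ≠ v}

/-- Generic: binary (each node has zero or two children) and leaves take distinct values. -/
def Generic : Prop :=
  (∀ v, Nat.card {w : Fin d.n // d.parent w = v ∧ w ≠ v} = 0 ∨
        Nat.card {w : Fin d.n // d.parent w = v ∧ w ≠ v} = 2) ∧
  ∀ v w, d.IsLeafNode v → d.IsLeafNode w → v ≠ w → d.val v ≠ d.val w

/-- `a` is the least common ancestor of `u` and `w`. -/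
def IsLCA (u w a : Fin d.n) : Prop :=
  d.Desc u a ∧ d.Desc w a ∧ ∀ b, d.Desc u b → d.Desc w b → d.Desc a b

/-- The type of leaves. -/
def Leaf := {v : Fin d.n // d.IsLeafNode v}

end MergeTreeData

/-- Isomorphism of gauged spaces: a homeomorphism commuting with the gauges. -/
def GaugedIso {A B : Type*} [TopologicalSpace A] [TopologicalSpace B]
    (πA : A → ℝ) (πB : B → ℝ) : Prop :=
  ∃ e : A ≃ₜ B, ∀ x, πB (e x) = πA x

/-- A gauged space is a cellular merge tree if it is isomorphic (as a gauged space) to the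
realization of some combinatorial merge tree data. -/
def IsCellularMergeTree {A : Type*} [TopologicalSpace A] (π : A → ℝ) : Prop :=
  ∃ d : MergeTreeData, GaugedIso d.gauge π
/-- The epigraph of `f`. -/
def epi {X : Type*} (f : X → ℝ) : Set (X × ℝ) := {p | f p.1 ≤ p.2}

/-- The merge tree relation on the epigraph: identify `(x,t)` and `(y,t)` when `x` and `y`
lie in the same connected component of the sublevel set at `t`. -/
def mtRel {X : Type*} [TopologicalSpace X] (f : X → ℝ) : ↥(epi f) → ↥(epi f) → Prop :=
  fun a b => a.1.2 = b.1.2 ∧ a.1.1 ∈ connectedComponentIn (sub f a.1.2) b.1.1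

/-- The merge tree of a function. -/
def MergeTree {X : Type*} [TopologicalSpace X] (f : X → ℝ) := Quot (mtRel f)

instance {X : Type*} [TopologicalSpace X] (f : X → ℝ) : TopologicalSpace (MergeTree f) :=
  instTopologicalSpaceQuot

/-- The gauge on the merge tree of a function. -/
def mtGauge {X : Type*} [TopologicalSpace X] (f : X → ℝ) : MergeTree f → ℝ :=
  Quot.lift (fun a => a.1.2) (fun _ _ h => h.1)

/-!
In a tree-like space the arc between two points lies in every closed connected set containing
both, so `x` and `y` are in the same component of `{f ≤ t}` exactly when `t` is at least the
maximum of `f` on that arc. In particular the components of the sublevel sets depend continuously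
on the level from above. The merge tree of `f` is therefore determined by the levels at which the
components of points merge, just as `T` is determined by the levels at which its leaves merge. An
isomorphism `MT(f) ≅ T` amounts to a choice of one point of `X` per leaf of `T` such that these
points merge as the leaves do and every component of every sublevel set contains one of them. The
components of such points at their own levels are precisely the local minima of `f`, and two
leaves merge at the level of their least common ancestor.

The geometric realization of a finite tree is tree-like because each edge is a bridge: deleting
it splits the vertices into two sides, and the affine extension of the indicator of one side is a
continuous function that separates the interior points of this edge from all other points.
-/

section Arcs

open Function Set unitInterval

variable {X : Type*} [TopologicalSpace X]

/-- Two points are joined by an arc if they are equal or the endpoints of an injective path.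
The first alternative is needed because a constant path is not injective. -/
def JoinedByArc (x y : X) : Prop := x = y ∨ ∃ γ : Path x y, Injective γ

theorem injective_subpath {x y : X} {γ : Path x y} (hγ : Injective γ) {s t : I} (hst : s ≠ t) :
    Injective (γ.subpath s t) := by
  intro u v huv
  have h : (Icc.convexComb s t u : ℝ) = Icc.convexComb s t v := congrArg Subtype.val (hγ huv)
  simp only [Icc.coe_convexComb] at h
  refine Subtype.ext (mul_right_cancel₀ (sub_ne_zero.2 (Subtype.coe_ne_coe.2 hst)) ?_)
  linarith

theorem joinedByArc_of_injective {x y : X} {γ : Path x y} (hγ : Injective γ) (s t : I) :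
    JoinedByArc (γ s) (γ t) := by
  rcases eq_or_ne s t with rfl | hst
  · exact .inl rfl
  · exact .inr ⟨γ.subpath s t, injective_subpath hγ hst⟩

theorem injective_trans_of_range_inter_range_subset {x y z : X} {α : Path x y} {β : Path y z}
    (hα : Injective α) (hβ : Injective β) (h : range α ∩ range β ⊆ {y}) :
    Injective (α.trans β) := by
  intro s t hst
  wlog hle : s ≤ t generalizing s t
  · exact (this hst.symm (le_of_not_ge hle)).symm
  simp only [Path.trans_apply] at hst
  split_ifs at hst with hs ht ht
  · exact Subtype.ext (by linarith [Subtype.ext_iff.1 (hα hst)])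
  · have hy : β _ = y := h ⟨⟨_, hst⟩, mem_range_self _⟩
    have ht' := Subtype.ext_iff.1 (hβ (hy.trans β.source.symm))
    exact absurd ht' (by simp only [Icc.coe_zero]; linarith)
  · exact absurd ((Subtype.coe_le_coe.2 hle).trans ht) hs
  · exact Subtype.ext (by linarith [Subtype.ext_iff.1 (hβ hst)])

theorem JoinedByArc.trans [T2Space X] {x y z : X} (hxy : JoinedByArc x y)
    (hyz : JoinedByArc y z) : JoinedByArc x z := by
  obtain rfl | ⟨γ, hγ⟩ := hxy
  · exact hyz
  obtain rfl | ⟨γ', hγ'⟩ := hyz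
  · exact .inr ⟨γ, hγ⟩
  -- Switch from `γ` to `γ'` at the first time `s` at which `γ` meets `γ'`.
  have hclosed : IsClosed (γ ⁻¹' range γ') :=
    (isCompact_range γ'.continuous).isClosed.preimage γ.continuous
  obtain ⟨s, ⟨u, hu⟩, hfirst⟩ := hclosed.isCompact.exists_isLeast ⟨1, 0, by simp⟩
  rcases eq_or_ne s 0 with rfl | hs
  · simpa [hu] using joinedByArc_of_injective hγ' u 1
  rcases eq_or_ne u 1 with rfl | hu1
  · simpa [← hu] using joinedByArc_of_injective hγ 0 s
  refine .inr ⟨((γ.subpath 0 s).cast γ.source.symm hu).trans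
    ((γ'.subpath u 1).cast rfl γ'.target.symm),
    injective_trans_of_range_inter_range_subset (injective_subpath hγ hs.symm)
      (injective_subpath hγ' hu1) ?_⟩
  simp only [Path.cast_coe, Path.range_subpath_of_le _ _ _ (unitInterval.nonneg' : 0 ≤ s)]
  rintro _ ⟨⟨r, hr, rfl⟩, hr'⟩
  rw [Path.range_subpath] at hr'
  rw [le_antisymm hr.2 (hfirst (image_subset_range _ _ hr')), ← hu]
  rfl

theorem exists_injective_path_range_inter_eq_singleton {A B : Set X} (hA : IsClosed A)
    (hB : IsClosed B) (hAB : Disjoint A B) {x y : X} (hx : x ∈ A) (hy : y ∈ B)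
    (hxy : JoinedByArc x y) :
    ∃ (p q : X) (γ : Path p q), p ∈ A ∧ q ∈ B ∧ Injective γ ∧
      range γ ∩ A = {p} ∧ range γ ∩ B = {q} := by
  obtain rfl | ⟨γ, hγ⟩ := hxy
  · exact absurd hy (hAB.notMem_of_mem_left hx)
  obtain ⟨a, ha, hlast⟩ := (hA.preimage γ.continuous).isCompact.exists_isGreatest
    ⟨0, by simpa using hx⟩
  obtain ⟨b, ⟨hb, hab⟩, hfirst⟩ :=
    ((hB.preimage γ.continuous).inter isClosed_Ici).isCompact.exists_isLeast
      ⟨1, by simpa using hy, (a.2.2 : a ≤ 1)⟩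
  have hne : a ≠ b := fun h => hAB.notMem_of_mem_left ha (h ▸ hb)
  refine ⟨γ a, γ b, γ.subpath a b, ha, hb, injective_subpath hγ hne, ?_, ?_⟩ <;>
    rw [Path.range_subpath_of_le _ _ _ hab]
  · refine Subset.antisymm ?_ (singleton_subset_iff.2 ⟨⟨a, ⟨le_rfl, hab⟩, rfl⟩, ha⟩)
    rintro _ ⟨⟨r, hr, rfl⟩, hrA⟩
    rw [le_antisymm (hlast hrA) hr.1]
    rfl
  · refine Subset.antisymm ?_ (singleton_subset_iff.2 ⟨⟨b, ⟨hab, le_rfl⟩, rfl⟩, hb⟩)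
    rintro _ ⟨⟨r, hr, rfl⟩, hrB⟩
    rw [le_antisymm hr.2 (hfirst ⟨hrB, hr.1⟩)]
    rfl

variable (X) in
/-- A tree-like space: any two points are joined by an arc, and the arc between two points is
contained in every closed connected set containing both. The second condition replaces the
uniqueness of arcs. -/
structure IsTreeLike : Prop where
  joinedByArc : ∀ x y : X, JoinedByArc x y
  range_subset : ∀ {x y : X} {γ : Path x y}, Injective γ → ∀ {C : Set X}, IsClosed C →
    IsPreconnected C → x ∈ C → y ∈ C → range γ ⊆ C

end Arcs

section InjectiveLevels

open Function Set

theorem exists_lt_lt_apply_eq {α β : Type*} [ConditionallyCompleteLinearOrder α]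
    [TopologicalSpace α] [OrderTopology α] [DenselyOrdered α] [LinearOrder β] [TopologicalSpace β]
    [OrderClosedTopology β] [DenselyOrdered β] {g : α → β} (hg : Continuous g) {p s q : α}
    (hps : p ≤ s) (hsq : s ≤ q) (hp : g p < g s) (hq : g q < g s) {a : β} (ha : a < g s) :
    ∃ r < s, ∃ r' > s, g r = g r' ∧ g r ∈ Ioo a (g s) := by
  obtain ⟨c, hc, hcs⟩ := exists_between (max_lt ha (max_lt hp hq))
  obtain ⟨hac, hpc, hqc⟩ : a < c ∧ g p < c ∧ g q < c := by simpa using hc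
  obtain ⟨r, hr, rfl⟩ := intermediate_value_Ioo hps hg.continuousOn ⟨hpc, hcs⟩
  obtain ⟨r', hr', hrr'⟩ := intermediate_value_Ioo' hsq hg.continuousOn ⟨hqc, hcs⟩
  exact ⟨r, hr.2, r', hr'.1, hrr'.symm, hac, hcs⟩

-- Otherwise `C`, and with it both ends of `γ`, lies strictly on one side of the level `h (γ s)`,
-- so `γ` crosses a nearby level both before and after `s`.
theorem mem_of_injective_of_isPreconnected {X β : Type*} [TopologicalSpace X] [LinearOrder β]
    [TopologicalSpace β] [OrderClosedTopology β] [DenselyOrdered β] {x y : X} {γ : Path x y}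
    (hγ : Injective γ) {h : X → β} (hh : Continuous h) {a b : β}
    (hinj : InjOn h (h ⁻¹' Ioo a b)) {C : Set X} (hC : IsPreconnected C) (hx : x ∈ C)
    (hy : y ∈ C) {s : unitInterval} (hs : h (γ s) ∈ Ioo a b) : γ s ∈ C := by
  by_contra hsC
  have hlevel : h (γ s) ∉ h '' C := by
    rintro ⟨w, hw, hws⟩
    exact hsC (hinj (by rwa [mem_preimage, hws]) hs hws ▸ hw)
  have hne : ∀ {w}, w ∈ C → h w ≠ h (γ s) := fun hw heq => hlevel ⟨_, hw, heq⟩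
  have hx' : h (γ 0) ≠ h (γ s) := hne (by rwa [γ.source])
  have hy' : h (γ 1) ≠ h (γ s) := hne (by rwa [γ.target])
  have hord : (h '' C).OrdConnected := (hC.image h hh.continuousOn).ordConnected
  have hfold : ∀ {r r'}, r < s → s < r' → h (γ r) = h (γ r') → h (γ r) ∉ Ioo a b :=
    fun hr hr' heq hmem => (hr.trans hr').ne
      (hγ (hinj hmem (by rwa [mem_preimage, ← heq]) heq))
  have hx₀ : h (γ 0) ∈ h '' C := ⟨_, by rwa [γ.source], rfl⟩
  have hy₁ : h (γ 1) ∈ h '' C := ⟨_, by rwa [γ.target], rfl⟩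
  rcases hx'.lt_or_gt with hx' | hx' <;> rcases hy'.lt_or_gt with hy' | hy'
  · obtain ⟨r, hr, r', hr', heq, hmem⟩ := exists_lt_lt_apply_eq (hh.comp γ.continuous)
      unitInterval.nonneg' unitInterval.le_one' hx' hy' hs.1
    exact hfold hr hr' heq ⟨hmem.1, hmem.2.trans hs.2⟩
  · exact hlevel (hord.out hx₀ hy₁ ⟨hx'.le, hy'.le⟩)
  · exact hlevel (hord.out hy₁ hx₀ ⟨hy'.le, hx'.le⟩)
  · obtain ⟨r, hr, r', hr', heq, hmem⟩ := exists_lt_lt_apply_eq (β := βᵒᵈ)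
      (hh.comp γ.continuous) unitInterval.nonneg' unitInterval.le_one' hx' hy' hs.2
    exact hfold hr hr' heq ⟨hs.1.trans hmem.2, hmem.1⟩

end InjectiveLevels

namespace TreeSpace

open Function Set unitInterval

variable {V : Type*} {G : SimpleGraph V}

/-- The point at parameter `t` of the oriented edge `e`. -/
def edgePoint (e : G.Dart) (t : I) : TreeSpace G := Quot.mk (treeRel G) (e, t)

theorem exists_eq_edgePoint (x : TreeSpace G) : ∃ e t, x = edgePoint e t := by
  obtain ⟨⟨e, t⟩, rfl⟩ := Quot.exists_rep x
  exact ⟨e, t, rfl⟩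

theorem edgePoint_symm (e : G.Dart) (t : I) : edgePoint e.symm t = edgePoint e (σ t) :=
  Quot.sound (Or.inl ⟨rfl, by simp⟩)

theorem edgePoint_zero_eq {e e' : G.Dart} (h : e.fst = e'.fst) :
    edgePoint e 0 = edgePoint e' 0 :=
  Quot.sound (Or.inr ⟨h, rfl, rfl⟩)

theorem continuous_edgePoint (e : G.Dart) : Continuous (edgePoint e) :=
  continuous_quot_mk.comp (by fun_prop)

/-- The function on the geometric realization that is affine on each edge and takes the value
`w v` at each vertex `v`. -/
def affineExtension (w : V → ℝ) : TreeSpace G → ℝ :=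
  Quot.lift (fun p => (1 - p.2 : ℝ) * w p.1.fst + p.2 * w p.1.snd) <| by
    rintro ⟨e, t⟩ ⟨e', t'⟩ (⟨he, ht⟩ | ⟨he, ht, ht'⟩)
    · obtain rfl : e = e'.symm := he
      simp only [SimpleGraph.Dart.symm_toProd, Prod.fst_swap, Prod.snd_swap] at ht ⊢
      rw [ht]
      ring
    · simp only at he ht ht'
      simp [he, ht, ht']

theorem affineExtension_edgePoint (w : V → ℝ) (e : G.Dart) (t : I) :
    affineExtension w (edgePoint e t) = (1 - t : ℝ) * w e.fst + t * w e.snd := rfl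

theorem continuous_affineExtension (w : V → ℝ) :
    Continuous (affineExtension w : TreeSpace G → ℝ) := by
  have : DiscreteTopology G.Dart := ⟨rfl⟩
  refine continuous_quot_lift _ (continuous_prod_of_discrete_left.2 fun e => ?_)
  dsimp only
  fun_prop

theorem injective_edgePoint (e : G.Dart) : Injective (edgePoint e) := by
  intro t t' h
  have := congrArg (affineExtension (Pi.single e.snd 1)) h
  simpa [affineExtension_edgePoint, e.adj.ne, Subtype.ext_iff] using this

theorem exists_eq_edgePoint_of_affineExtension_single_pos {x : TreeSpace G} {v : V}
    (hv : 0 < affineExtension (Pi.single v 1) x) : ∃ e t, e.fst = v ∧ x = edgePoint e t := by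
  obtain ⟨e, t, rfl⟩ := exists_eq_edgePoint x
  by_cases hfst : e.fst = v
  · exact ⟨e, t, hfst, rfl⟩
  by_cases hsnd : e.snd = v
  · exact ⟨e.symm, σ t, hsnd, by rw [edgePoint_symm, symm_symm]⟩
  · simp [affineExtension_edgePoint, hfst, hsnd] at hv

theorem eq_of_affineExtension_single_eq {x y : TreeSpace G}
    (h : ∀ v, affineExtension (Pi.single v 1) x = affineExtension (Pi.single v 1) y) : x = y := by
  obtain ⟨v, hv⟩ : ∃ v, 0 < affineExtension (Pi.single v 1) x := by
    obtain ⟨e, t, rfl⟩ := exists_eq_edgePoint x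
    rcases t.2.1.eq_or_lt with ht | ht
    · exact ⟨e.fst, by simp [affineExtension_edgePoint, ← ht]⟩
    · exact ⟨e.snd, by simpa [affineExtension_edgePoint, e.adj.ne] using ht⟩
  obtain ⟨e, t, rfl, rfl⟩ := exists_eq_edgePoint_of_affineExtension_single_pos hv
  obtain ⟨e', t', he, rfl⟩ := exists_eq_edgePoint_of_affineExtension_single_pos (h _ ▸ hv)
  have hne : e'.snd ≠ e.fst := he ▸ e'.adj.ne'
  obtain rfl : t = t' := by
    have := h e.fst
    simpa [affineExtension_edgePoint, e.adj.ne', he, hne, Subtype.ext_iff] using this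
  rcases eq_or_ne t 0 with rfl | ht
  · exact edgePoint_zero_eq he.symm
  have hsnd : e'.snd = e.snd := by
    by_contra hsnd
    exact ht (by simpa [affineExtension_edgePoint, e.adj.ne, he, hsnd] using h e.snd)
  rw [SimpleGraph.Dart.ext e e' (Prod.ext he.symm hsnd.symm)]

theorem t2Space : T2Space (TreeSpace G) :=
  .of_injective_continuous (f := fun x v => affineExtension (Pi.single v 1) x)
    (fun _ _ h => eq_of_affineExtension_single_eq (congrFun h))
    (continuous_pi fun _ => continuous_affineExtension _)

theorem finite_dart [Finite V] : Finite G.Dart :=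
  Finite.of_injective (fun e : G.Dart => e.toProd) fun _ _ h => SimpleGraph.Dart.ext _ _ h

theorem compactSpace [Finite V] : CompactSpace (TreeSpace G) := by
  have : Finite G.Dart := finite_dart
  exact Quot.compactSpace

theorem joinedByArc_edgePoint (e : G.Dart) (s t : I) :
    JoinedByArc (edgePoint e s) (edgePoint e t) :=
  joinedByArc_of_injective
    (γ := ⟨⟨edgePoint e, continuous_edgePoint e⟩, rfl, rfl⟩) (injective_edgePoint e) s t

theorem joinedByArc_edgePoint_zero {u v : V} (p : G.Walk u v) {e e' : G.Dart} (he : e.fst = u)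
    (he' : e'.fst = v) : JoinedByArc (edgePoint e 0) (edgePoint e' 0) := by
  have : T2Space (TreeSpace G) := t2Space
  induction p generalizing e with
  | nil => exact .inl (edgePoint_zero_eq (he.trans he'.symm))
  | @cons u w _ huw _ ih =>
    let k : G.Dart := ⟨(u, w), huw⟩
    have hk : JoinedByArc (edgePoint e 0) (edgePoint k.symm 0) := by
      rw [edgePoint_zero_eq (e' := k) he, edgePoint_symm]
      exact joinedByArc_edgePoint k _ _
    exact hk.trans (ih rfl he')

theorem joinedByArc (hG : G.Connected) (x y : TreeSpace G) : JoinedByArc x y := by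
  have : T2Space (TreeSpace G) := t2Space
  obtain ⟨e, t, rfl⟩ := exists_eq_edgePoint x
  obtain ⟨e', t', rfl⟩ := exists_eq_edgePoint y
  obtain ⟨p⟩ := hG e.fst e'.fst
  exact ((joinedByArc_edgePoint e t 0).trans (joinedByArc_edgePoint_zero p rfl rfl)).trans
    (joinedByArc_edgePoint e' 0 t')

/-- The coordinate along the oriented edge `e`: the affine function that is `0` at the vertices
of the component of `e.fst` in the graph without the edge `e`, and `1` at the vertices of the
component of `e.snd`. -/
def edgeCoord (e : G.Dart) : TreeSpace G → ℝ :=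
  affineExtension ({v | (G.deleteEdges {e.edge}).Reachable e.snd v}.indicator 1)

theorem continuous_edgeCoord (e : G.Dart) : Continuous (edgeCoord e) :=
  continuous_affineExtension _

theorem edgeCoord_edgePoint (hG : G.IsAcyclic) (e : G.Dart) (t : I) :
    edgeCoord e (edgePoint e t) = t := by
  have hbridge : ¬ (G.deleteEdges {e.edge}).Reachable e.fst e.snd :=
    SimpleGraph.isBridge_iff.1 (SimpleGraph.isAcyclic_iff_forall_adj_isBridge.1 hG e.adj)
  have hfst : e.fst ∉ {v | (G.deleteEdges {e.edge}).Reachable e.snd v} := fun h => hbridge h.symm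
  simp [edgeCoord, affineExtension_edgePoint, indicator_of_notMem hfst]

theorem edgeCoord_edgePoint_of_edge_ne {e e' : G.Dart} (h : e'.edge ≠ e.edge) (t : I) :
    edgeCoord e (edgePoint e' t) = 0 ∨ edgeCoord e (edgePoint e' t) = 1 := by
  have hadj : (G.deleteEdges {e.edge}).Adj e'.fst e'.snd :=
    SimpleGraph.deleteEdges_adj.2 ⟨e'.adj, h⟩
  have hiff : e'.snd ∈ {v | (G.deleteEdges {e.edge}).Reachable e.snd v} ↔
      e'.fst ∈ {v | (G.deleteEdges {e.edge}).Reachable e.snd v} :=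
    ⟨fun h => h.trans hadj.symm.reachable, fun h => h.trans hadj.reachable⟩
  by_cases hmem : e'.fst ∈ {v | (G.deleteEdges {e.edge}).Reachable e.snd v}
  · simp [edgeCoord, affineExtension_edgePoint, indicator_of_mem hmem,
      indicator_of_mem (hiff.2 hmem)]
  · simp [edgeCoord, affineExtension_edgePoint, indicator_of_notMem hmem,
      indicator_of_notMem (mt hiff.1 hmem)]

theorem exists_eq_edgePoint_of_edgeCoord_mem_Ioo {e : G.Dart} {x : TreeSpace G}
    (hx : edgeCoord e x ∈ Ioo 0 1) : ∃ t, x = edgePoint e t := by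
  obtain ⟨e', t, rfl⟩ := exists_eq_edgePoint x
  by_cases h : e'.edge = e.edge
  · obtain rfl | rfl := SimpleGraph.dart_edge_eq_iff _ _ |>.1 h
    · exact ⟨t, rfl⟩
    · exact ⟨_, edgePoint_symm e t⟩
  · rcases edgeCoord_edgePoint_of_edge_ne h t with h | h <;> simp [h] at hx

theorem injOn_edgeCoord (hG : G.IsAcyclic) (e : G.Dart) :
    InjOn (edgeCoord e) (edgeCoord e ⁻¹' Ioo 0 1) := by
  intro x hx y hy h
  obtain ⟨t, rfl⟩ := exists_eq_edgePoint_of_edgeCoord_mem_Ioo hx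
  obtain ⟨t', rfl⟩ := exists_eq_edgePoint_of_edgeCoord_mem_Ioo hy
  rw [edgeCoord_edgePoint hG, edgeCoord_edgePoint hG] at h
  rw [Subtype.ext h]

theorem range_subset [Finite V] (hG : G.IsAcyclic) {x y : TreeSpace G} {γ : Path x y}
    (hγ : Injective γ) {C : Set (TreeSpace G)} (hC : IsClosed C) (hC' : IsPreconnected C)
    (hx : x ∈ C) (hy : y ∈ C) : range γ ⊆ C := by
  have : Finite G.Dart := finite_dart
  let vertices := range fun e : G.Dart => edgePoint e 0
  have hdense : Dense (γ ⁻¹' vertices)ᶜ := by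
    rw [compl_eq_univ_sdiff]
    exact dense_univ.sdiff_finite ((finite_range _).preimage hγ.injOn)
  have hsub : (γ ⁻¹' vertices)ᶜ ⊆ γ ⁻¹' C := by
    intro s hs
    obtain ⟨e, t, hst⟩ := exists_eq_edgePoint (γ s)
    have ht₀ : t ≠ 0 := by
      rintro rfl
      exact hs ⟨e, hst.symm⟩
    have ht₁ : t ≠ 1 := by
      rintro rfl
      exact hs ⟨e.symm, by simpa [hst] using edgePoint_symm e 0⟩
    refine mem_of_injective_of_isPreconnected hγ (continuous_edgeCoord e)
      (injOn_edgeCoord hG e) hC' hx hy ?_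
    rw [hst, edgeCoord_edgePoint hG]
    exact ⟨unitInterval.pos_iff_ne_zero.2 ht₀, unitInterval.lt_one_iff_ne_one.2 ht₁⟩
  rw [range_subset_iff]
  intro s
  exact (hC.preimage γ.continuous).closure_subset_iff.2 hsub (hdense s)

theorem isTreeLike [Finite V] (hG : G.Connected) (hG' : G.IsAcyclic) :
    IsTreeLike (TreeSpace G) where
  joinedByArc := joinedByArc hG
  range_subset hγ _ := range_subset hG' hγ

end TreeSpace

section SublevelComponents

open Function Set

variable {X : Type*} [TopologicalSpace X] {f : X → ℝ}

/-- The connected component of `x` in the sublevel set of `f` at level `t`; it is empty when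
`t < f x`. -/
abbrev sublevelComponent (f : X → ℝ) (t : ℝ) (x : X) : Set X := connectedComponentIn (sub f t) x

theorem le_of_mem_sublevelComponent {t : ℝ} {x y : X} (h : x ∈ sublevelComponent f t y) :
    f x ≤ t :=
  connectedComponentIn_subset (sub f t) y h

theorem mem_sublevelComponent_self {t : ℝ} {x : X} : x ∈ sublevelComponent f t x ↔ f x ≤ t :=
  ⟨le_of_mem_sublevelComponent, fun h => mem_connectedComponentIn h⟩

theorem mem_sublevelComponent_comm {t : ℝ} {x y : X} :
    x ∈ sublevelComponent f t y ↔ y ∈ sublevelComponent f t x := by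
  have symm {x y : X} (h : x ∈ sublevelComponent f t y) : y ∈ sublevelComponent f t x := by
    have hy : y ∈ sub f t := connectedComponentIn_nonempty_iff.1 ⟨x, h⟩
    rw [sublevelComponent, ← connectedComponentIn_eq h]
    exact mem_connectedComponentIn hy
  exact ⟨symm, symm⟩

theorem mem_sublevelComponent_trans {t : ℝ} {x y z : X} (hxy : x ∈ sublevelComponent f t y)
    (hyz : y ∈ sublevelComponent f t z) : x ∈ sublevelComponent f t z := by
  rwa [sublevelComponent, connectedComponentIn_eq hyz]

theorem sublevelComponent_mono {s t : ℝ} (hst : s ≤ t) (x : X) :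
    sublevelComponent f s x ⊆ sublevelComponent f t x :=
  connectedComponentIn_mono x fun _ hz => le_trans hz hst

theorem isClosed_sublevelComponent (hf : Continuous f) (t : ℝ) (x : X) :
    IsClosed (sublevelComponent f t x) := by
  by_cases hx : x ∈ sub f t
  · refine isClosed_of_closure_subset
      (isPreconnected_connectedComponentIn.closure.subset_connectedComponentIn
        (subset_closure (mem_connectedComponentIn hx)) ?_)
    exact closure_minimal (connectedComponentIn_subset _ _) (isClosed_le hf continuous_const)
  · rw [sublevelComponent, connectedComponentIn_eq_empty hx]
    exact isClosed_empty

theorem IsTreeLike.mem_sublevelComponent_iff (hX : IsTreeLike X) (hf : Continuous f) {x y : X}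
    {γ : Path x y} (hγ : Injective γ) {t : ℝ} :
    x ∈ sublevelComponent f t y ↔ ∀ z ∈ range γ, f z ≤ t := by
  have hx : x ∈ range γ := ⟨0, γ.source⟩
  have hy : y ∈ range γ := ⟨1, γ.target⟩
  constructor
  · intro h z hz
    have hyt := le_of_mem_sublevelComponent (mem_sublevelComponent_comm.1 h)
    exact le_of_mem_sublevelComponent (hX.range_subset hγ (isClosed_sublevelComponent hf t y)
      isPreconnected_connectedComponentIn h (mem_sublevelComponent_self.2 hyt) hz)
  · intro h
    exact (isPreconnected_range γ.continuous).subset_connectedComponentIn hy h hx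

theorem IsTreeLike.isGreatest_image_range_iff (hX : IsTreeLike X) (hf : Continuous f) {x y : X}
    {γ : Path x y} (hγ : Injective γ) {c : ℝ} :
    IsGreatest (f '' range γ) c ↔ ∀ t, x ∈ sublevelComponent f t y ↔ c ≤ t := by
  have hcompact : IsCompact (f '' range γ) := (isCompact_range γ.continuous).image hf
  have hne : (f '' range γ).Nonempty := (range_nonempty γ).image f
  calc IsGreatest (f '' range γ) c ↔ IsLUB (f '' range γ) c :=
        ⟨IsGreatest.isLUB, fun h => ⟨h.mem_of_isClosed hne hcompact.isClosed, h.1⟩⟩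
    _ ↔ ∀ t, x ∈ sublevelComponent f t y ↔ c ≤ t := by
        simp only [isLUB_iff_le_iff, hX.mem_sublevelComponent_iff hf hγ, mem_upperBounds,
          forall_mem_image, iff_comm]

theorem IsTreeLike.mem_sublevelComponent_iff_forall_gt (hX : IsTreeLike X) (hf : Continuous f)
    {t : ℝ} {x y : X} :
    x ∈ sublevelComponent f t y ↔ ∀ s > t, x ∈ sublevelComponent f s y := by
  obtain rfl | ⟨γ, hγ⟩ := hX.joinedByArc x y
  · simp only [mem_sublevelComponent_self, gt_iff_lt, forall_gt_imp_ge_iff_le_of_dense]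
  · refine ⟨fun h s hs => sublevelComponent_mono hs.le y h, fun h => ?_⟩
    simp only [hX.mem_sublevelComponent_iff hf hγ] at h ⊢
    exact fun z hz => le_of_forall_gt_imp_ge_of_dense fun s hs => h s hs z hz

theorem IsTreeLike.isClosed_setOf_mem_sublevelComponent (hX : IsTreeLike X) (hf : Continuous f)
    (x : X) : IsClosed {p : X × ℝ | p.1 ∈ sublevelComponent f p.2 x} := by
  have h : {p : X × ℝ | p.1 ∈ sublevelComponent f p.2 x} =
      ⋂ s, {p : X × ℝ | p.2 < s → p.1 ∈ sublevelComponent f s x} := by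
    ext p
    simp only [mem_ofPred_eq, mem_iInter]
    exact hX.mem_sublevelComponent_iff_forall_gt hf
  rw [h]
  exact isClosed_iInter fun s => isClosed_imp (isOpen_lt continuous_snd continuous_const)
    ((isClosed_sublevelComponent hf s x).preimage continuous_fst)

namespace IsLocMin

theorem eq_of_mem {M : Set X} (hM : IsLocMin f M) {x y : X} (hx : x ∈ M) (hy : y ∈ M) :
    f x = f y := by
  obtain ⟨c, hc⟩ := hM.2.1
  rw [hc x hx, hc y hy]

theorem eq_sublevelComponent {M : Set X} (hM : IsLocMin f M) {x : X} (hx : x ∈ M) :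
    M = sublevelComponent f (f x) x := by
  have hsub : M ⊆ sublevelComponent f (f x) x :=
    hM.1.isPreconnected.subset_connectedComponentIn hx fun y hy => (hM.eq_of_mem hy hx).le
  by_contra hne
  obtain ⟨y, hy, hlt⟩ := hM.2.2 _ (isConnected_connectedComponentIn_iff.2 (le_refl (f x)))
    (hsub.ssubset_of_ne hne)
  exact (hlt x hx).not_ge (le_of_mem_sublevelComponent hy)

theorem isClosed {M : Set X} (hM : IsLocMin f M) (hf : Continuous f) : IsClosed M := by
  obtain ⟨x, hx⟩ := hM.1.nonempty
  rw [hM.eq_sublevelComponent hx]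
  exact isClosed_sublevelComponent hf _ _

theorem eq_of_mem_of_mem {M N : Set X} (hM : IsLocMin f M) (hN : IsLocMin f N) {x : X}
    (hxM : x ∈ M) (hxN : x ∈ N) : M = N := by
  rw [hM.eq_sublevelComponent hxM, hN.eq_sublevelComponent hxN]

theorem mem_sublevelComponent_iff {M : Set X} (hM : IsLocMin f M) {x y : X} (hx : x ∈ M)
    (hy : y ∈ M) {t : ℝ} {z : X} :
    x ∈ sublevelComponent f t z ↔ y ∈ sublevelComponent f t z := by
  have move {x y : X} (hx : x ∈ M) (hy : y ∈ M) (h : x ∈ sublevelComponent f t z) :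
      y ∈ sublevelComponent f t z := by
    rw [hM.eq_sublevelComponent hx] at hy
    exact mem_sublevelComponent_trans
      (sublevelComponent_mono (le_of_mem_sublevelComponent h) x hy) h
  exact ⟨move hx hy, move hy hx⟩

end IsLocMin

theorem isLocMin_sublevelComponent {x : X} (h : ∀ y ∈ sublevelComponent f (f x) x, f x ≤ f y) :
    IsLocMin f (sublevelComponent f (f x) x) := by
  have hconst : ∀ y ∈ sublevelComponent f (f x) x, f y = f x := fun y hy =>
    (le_of_mem_sublevelComponent hy).antisymm (h y hy)
  have hx : x ∈ sublevelComponent f (f x) x := mem_sublevelComponent_self.2 le_rfl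
  refine ⟨isConnected_connectedComponentIn_iff.2 (le_refl (f x)), ⟨f x, hconst⟩, ?_⟩
  intro M' hM' hss
  by_contra! hle
  refine hss.2 (hM'.isPreconnected.subset_connectedComponentIn (hss.1 hx) fun z hz => ?_)
  obtain ⟨y, hy, hzy⟩ := hle z hz
  exact hzy.trans_eq (hconst y hy)

theorem exists_isLocMin_subset_sublevelComponent [CompactSpace X] (hf : Continuous f) {x : X}
    {t : ℝ} (hx : f x ≤ t) : ∃ M, IsLocMin f M ∧ M ⊆ sublevelComponent f t x := by
  obtain ⟨y, hy, hmin⟩ := (isClosed_sublevelComponent hf t x).isCompact.exists_isMinOn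
    ⟨x, mem_sublevelComponent_self.2 hx⟩ hf.continuousOn
  have hsub : sublevelComponent f (f y) y ⊆ sublevelComponent f t x := fun z hz =>
    mem_sublevelComponent_trans (sublevelComponent_mono (le_of_mem_sublevelComponent hy) y hz) hy
  exact ⟨_, isLocMin_sublevelComponent fun z hz => hmin (hsub hz), hsub⟩

end SublevelComponents

namespace MergeTreeData

open Function Set

variable {d : MergeTreeData}

theorem val_le_val_parent (v : Fin d.n) : d.val v ≤ d.val (d.parent v) := by
  rcases eq_or_ne v d.root with rfl | hv
  · rw [d.hroot]
  · exact (d.hval v hv).le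

theorem Desc.refl (v : Fin d.n) : d.Desc v v := ⟨0, rfl⟩

theorem Desc.trans {u v w : Fin d.n} : d.Desc u v → d.Desc v w → d.Desc u w
  | ⟨j, hj⟩, ⟨k, hk⟩ => ⟨k + j, by rw [iterate_add_apply, hj, hk]⟩

theorem desc_parent (v : Fin d.n) : d.Desc v (d.parent v) := ⟨1, rfl⟩

theorem Desc.total {u v w : Fin d.n} : d.Desc u v → d.Desc u w → d.Desc v w ∨ d.Desc w v := by
  rintro ⟨j, rfl⟩ ⟨k, rfl⟩
  rcases le_total j k with h | h
  · exact .inl ⟨k - j, by rw [← iterate_add_apply, Nat.sub_add_cancel h]⟩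
  · exact .inr ⟨j - k, by rw [← iterate_add_apply, Nat.sub_add_cancel h]⟩

theorem Desc.eq_or_val_lt {v w : Fin d.n} : d.Desc v w → v = w ∨ d.val v < d.val w := by
  rintro ⟨k, rfl⟩
  induction k with
  | zero => exact .inl rfl
  | succ k ih =>
    rw [iterate_succ_apply']
    rcases eq_or_ne (d.parent^[k] v) d.root with hroot | hroot
    · rwa [hroot, d.hroot, ← hroot]
    · have hle : d.val v ≤ d.val (d.parent^[k] v) :=
        ih.elim (fun h => (congrArg d.val h).le) le_of_lt
      exact .inr (hle.trans_lt (d.hval _ hroot))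

theorem Desc.val_le {v w : Fin d.n} (h : d.Desc v w) : d.val v ≤ d.val w := by
  obtain rfl | hlt := h.eq_or_val_lt
  exacts [le_rfl, hlt.le]

theorem IsLeafNode.eq_of_desc {v w : Fin d.n} (hw : d.IsLeafNode w) : d.Desc v w → v = w := by
  rintro ⟨k, hk⟩
  induction k with
  | zero => exact hk
  | succ k ih => exact ih (hw _ (by rwa [iterate_succ_apply'] at hk))

theorem exists_leaf_desc (v : Fin d.n) : ∃ l : d.Leaf, d.Desc l.1 v := by
  obtain ⟨w, hwv, hmin⟩ :=
    exists_min_image {w | d.Desc w v} d.val (toFinite _) ⟨v, Desc.refl v⟩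
  refine ⟨⟨w, fun u hu => ?_⟩, hwv⟩
  have huw : d.Desc u w := hu ▸ desc_parent u
  exact huw.eq_or_val_lt.resolve_right (hmin u (huw.trans hwv)).not_gt

theorem exists_isLCA (u w : Fin d.n) : ∃ a, d.IsLCA u w a := by
  obtain ⟨a, ⟨hua, hwa⟩, hmin⟩ :=
    exists_min_image {a | d.Desc u a ∧ d.Desc w a} d.val (toFinite _)
      ⟨d.root, d.hreach u, d.hreach w⟩
  refine ⟨a, hua, hwa, fun b hub hwb => ?_⟩
  rcases hua.total hub with hab | hba
  · exact hab
  · obtain rfl | hlt := hba.eq_or_val_lt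
    exacts [Desc.refl b, absurd hlt (hmin b ⟨hub, hwb⟩).not_gt]

/-- The branches of `T` through the nodes `u` and `w` have merged at level `t`, that is, `u` and
`w` have a common ancestor of value at most `t`. -/
def MergedAt (d : MergeTreeData) (t : ℝ) (u w : Fin d.n) : Prop :=
  ∃ v, d.Desc u v ∧ d.Desc w v ∧ d.val v ≤ t

theorem Desc.mergedAt {v w : Fin d.n} {t : ℝ} (h : d.Desc v w) (ht : d.val w ≤ t) :
    d.MergedAt t v w :=
  ⟨w, h, Desc.refl w, ht⟩

theorem MergedAt.symm {t : ℝ} {u w : Fin d.n} : d.MergedAt t u w → d.MergedAt t w u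
  | ⟨v, hu, hw, hv⟩ => ⟨v, hw, hu, hv⟩

theorem MergedAt.trans {t : ℝ} {u v w : Fin d.n} :
    d.MergedAt t u v → d.MergedAt t v w → d.MergedAt t u w := by
  rintro ⟨a, hua, hva, ha⟩ ⟨b, hvb, hwb, hb⟩
  rcases hva.total hvb with hab | hba
  · exact ⟨b, hua.trans hab, hwb, hb⟩
  · exact ⟨a, hua, hwb.trans hba, ha⟩

theorem mergedAt_self {t : ℝ} {v : Fin d.n} : d.MergedAt t v v ↔ d.val v ≤ t :=
  ⟨fun ⟨_, h, _, ht⟩ => h.val_le.trans ht, (Desc.refl v).mergedAt⟩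

theorem IsLCA.mergedAt_iff {t : ℝ} {u w a : Fin d.n} (h : d.IsLCA u w a) :
    d.MergedAt t u w ↔ d.val a ≤ t :=
  ⟨fun ⟨b, hub, hwb, hb⟩ => (h.2.2 b hub hwb).val_le.trans hb, fun ha => ⟨a, h.1, h.2.1, ha⟩⟩

theorem IsLeafNode.eq_of_mergedAt_val {u w : Fin d.n} (hw : d.IsLeafNode w)
    (h : d.MergedAt (d.val w) u w) : u = w := by
  obtain ⟨v, huv, hwv, hv⟩ := h
  obtain rfl := hwv.eq_or_val_lt.resolve_right hv.not_gt
  exact hw.eq_of_desc huv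

theorem self_mem_carrier (v : Fin d.n) : (v, d.val v) ∈ d.Carrier :=
  ⟨le_rfl, fun _ => val_le_val_parent v⟩

theorem exists_desc_mem_carrier {v : Fin d.n} {t : ℝ} (hv : d.val v ≤ t) :
    ∃ w, d.Desc v w ∧ (w, t) ∈ d.Carrier := by
  obtain ⟨w, ⟨hvw, hwt⟩, hmax⟩ :=
    exists_max_image {w | d.Desc v w ∧ d.val w ≤ t} d.val (toFinite _) ⟨v, Desc.refl v, hv⟩
  refine ⟨w, hvw, hwt, fun hroot => le_of_not_ge fun hparent => ?_⟩
  exact (hmax _ ⟨hvw.trans (desc_parent w), hparent⟩).not_gt (d.hval w hroot)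

theorem isClosed_carrier : IsClosed d.Carrier := by
  have hval (g : Fin d.n → ℝ) : Continuous fun p : Fin d.n × ℝ => g p.1 :=
    continuous_of_discreteTopology.comp continuous_fst
  exact (isClosed_le (hval d.val) continuous_snd).inter
    (isClosed_imp ((isOpen_discrete {v | v ≠ d.root}).preimage continuous_fst)
      (isClosed_le continuous_snd (hval fun v => d.val (d.parent v))))

/-- The point of `d.Space` at level `t` on the edge above the node `v`. -/
def point {v : Fin d.n} {t : ℝ} (h : (v, t) ∈ d.Carrier) : d.Space := Quot.mk _ ⟨(v, t), h⟩

theorem exists_eq_point (P : d.Space) :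
    ∃ (v : Fin d.n) (t : ℝ) (h : (v, t) ∈ d.Carrier), P = point h := by
  obtain ⟨⟨⟨v, t⟩, h⟩⟩ := P
  exact ⟨v, t, h, rfl⟩

theorem point_eq_point_of_desc {u v : Fin d.n} {t : ℝ} (hu : (u, t) ∈ d.Carrier)
    (hv : (v, t) ∈ d.Carrier) (h : d.Desc u v) : point hu = point hv := by
  obtain ⟨k, rfl⟩ := h
  induction k generalizing u with
  | zero => rfl
  | succ k ih =>
    rcases eq_or_ne u d.root with rfl | hroot
    · simp only [iterate_fixed d.hroot]
    have hle : d.val (d.parent u) ≤ t := (Desc.val_le ⟨k, rfl⟩).trans hv.1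
    have heq : t = d.val (d.parent u) := (hu.2 hroot).antisymm hle
    have hparent : (d.parent u, t) ∈ d.Carrier := heq ▸ self_mem_carrier _
    exact (Quot.sound ⟨rfl, rfl, heq⟩).trans (ih hparent hv)

/-- The part of the sublevel set of the gauge at level `t` that lies on the branch of the
node `v`. -/
def mergedSet (t : ℝ) (v : Fin d.n) : Set d.Space :=
  {P | Quot.lift (fun a : d.Carrier => a.1.2 ≤ t ∧ d.MergedAt t v a.1.1)
    (by
      rintro ⟨⟨u, s⟩, hu⟩ ⟨⟨_, _⟩, hw⟩ ⟨rfl, rfl, hs⟩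
      refine propext (and_congr_right fun hst => ?_)
      have h := (desc_parent u).mergedAt (hs.symm.trans_le hst)
      exact ⟨fun hvu => hvu.trans h, fun hvp => hvp.trans h.symm⟩) P}

theorem point_mem_mergedSet {s t : ℝ} {u v : Fin d.n} {hu : (u, s) ∈ d.Carrier} :
    point hu ∈ d.mergedSet t v ↔ s ≤ t ∧ d.MergedAt t v u :=
  Iff.rfl

theorem isClosed_mergedSet (t : ℝ) (v : Fin d.n) : IsClosed (d.mergedSet t v) := by
  have hsnd : Continuous fun a : d.Carrier => a.1.2 := by fun_prop
  have hfst : Continuous fun a : d.Carrier => a.1.1 := by fun_prop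
  exact isQuotientMap_quot_mk.isClosed_preimage.1
    ((isClosed_Iic.preimage hsnd).inter ((isClosed_discrete {w | d.MergedAt t v w}).preimage hfst))

theorem point_eq_point_iff {u v : Fin d.n} {t : ℝ} {hu : (u, t) ∈ d.Carrier}
    {hv : (v, t) ∈ d.Carrier} : point hu = point hv ↔ d.MergedAt t u v := by
  constructor
  · intro h
    have hmem : point hu ∈ d.mergedSet t u :=
      point_mem_mergedSet.2 ⟨le_rfl, mergedAt_self.2 hu.1⟩
    exact (point_mem_mergedSet.1 (h ▸ hmem)).2
  · rintro ⟨w, huw, hvw, hw⟩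
    obtain ⟨w', hww', hw'⟩ := exists_desc_mem_carrier hw
    rw [point_eq_point_of_desc hu hw' (huw.trans hww'),
      point_eq_point_of_desc hv hw' (hvw.trans hww')]

theorem mergedAt_of_isPreconnected {t : ℝ} {K : Set d.Space} (hK : IsPreconnected K)
    (hKt : ∀ P ∈ K, d.gauge P ≤ t) {r s : ℝ} {u v : Fin d.n} {hu : (u, r) ∈ d.Carrier}
    {hv : (v, s) ∈ d.Carrier} (huK : point hu ∈ K) (hvK : point hv ∈ K) : d.MergedAt t u v := by
  by_contra huv
  have hself {s : ℝ} {w : Fin d.n} {hw : (w, s) ∈ d.Carrier} (hwK : point hw ∈ K) :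
      point hw ∈ d.mergedSet t w :=
    point_mem_mergedSet.2 ⟨hKt _ hwK, mergedAt_self.2 (hw.1.trans (hKt _ hwK))⟩
  let W := {w : Fin d.n | ¬ d.MergedAt t u w}
  have hcover : K ⊆ d.mergedSet t u ∪ ⋃ w ∈ W, d.mergedSet t w := by
    intro P hP
    obtain ⟨w, s, hw, rfl⟩ := exists_eq_point P
    by_cases huw : d.MergedAt t u w
    · exact .inl (point_mem_mergedSet.2 ⟨hKt _ hP, huw⟩)
    · exact .inr (mem_biUnion (x := w) huw (hself hP))
  obtain ⟨P, -, hPu, hPW⟩ := isPreconnected_closed_iff.1 hK _ _ (isClosed_mergedSet t u)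
    ((toFinite W).isClosed_biUnion fun w _ => isClosed_mergedSet t w) hcover
    ⟨_, huK, hself huK⟩ ⟨_, hvK, mem_biUnion (x := v) huv (hself hvK)⟩
  obtain ⟨p, s, hp, rfl⟩ := exists_eq_point P
  obtain ⟨w, hw, hPw⟩ := mem_iUnion₂.1 hPW
  exact hw ((point_mem_mergedSet.1 hPu).2.trans (point_mem_mergedSet.1 hPw).2.symm)

end MergeTreeData

section MergeTreeOfFunction

open Function Set MergeTreeData

variable {X : Type*} [TopologicalSpace X] {f : X → ℝ} {d : MergeTreeData}

/-- The point of the merge tree of `f` represented by the point `(x, t)` of the epigraph. -/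
def mtPoint {x : X} {t : ℝ} (h : f x ≤ t) : MergeTree f := Quot.mk _ ⟨(x, t), h⟩

theorem exists_eq_mtPoint (P : MergeTree f) :
    ∃ (x : X) (t : ℝ) (h : f x ≤ t), P = mtPoint h := by
  obtain ⟨⟨⟨x, t⟩, h⟩⟩ := P
  exact ⟨x, t, h, rfl⟩

theorem mtRel_equivalence (f : X → ℝ) : Equivalence (mtRel f) where
  refl a := ⟨rfl, mem_sublevelComponent_self.2 a.2⟩
  symm := fun ⟨hlevel, h⟩ => ⟨hlevel.symm, hlevel ▸ mem_sublevelComponent_comm.1 h⟩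
  trans := fun ⟨hlevel, h⟩ ⟨hlevel', h'⟩ =>
    ⟨hlevel.trans hlevel', mem_sublevelComponent_trans h (hlevel ▸ h')⟩

theorem mtPoint_eq_mtPoint_iff {x y : X} {t : ℝ} {hx : f x ≤ t} {hy : f y ≤ t} :
    mtPoint hx = mtPoint hy ↔ x ∈ sublevelComponent f t y :=
  ((mtRel_equivalence f).quot_mk_eq_iff _ _).trans (and_iff_right rfl)

/-- A family of points of `X`, one for each leaf of `T`, whose sublevel components merge exactly
as the branches of the leaves of `T` do and meet every sublevel component of `f`. -/
structure RealizesLeaves (d : MergeTreeData) (f : X → ℝ) (x : d.Leaf → X) : Prop where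
  mem_iff : ∀ {l l' : d.Leaf} {t : ℝ},
    x l ∈ sublevelComponent f t (x l') ↔ d.MergedAt t l.1 l'.1
  exists_mem : ∀ {y : X} {t : ℝ}, f y ≤ t → ∃ l, x l ∈ sublevelComponent f t y

theorem RealizesLeaves.map_eq {x : d.Leaf → X} (hx : RealizesLeaves d f x) (l : d.Leaf) :
    f (x l) = d.val l.1 :=
  eq_of_forall_ge_iff fun t => by
    rw [← mem_sublevelComponent_self, hx.mem_iff, mergedAt_self]

section OfGaugedIso

variable {φ : MergeTree f → d.Space}

theorem exists_apply_mtPoint_eq (hgauge : ∀ P, d.gauge (φ P) = mtGauge f P) {x : X} {t : ℝ}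
    (h : f x ≤ t) : ∃ (w : Fin d.n) (hw : (w, t) ∈ d.Carrier), φ (mtPoint h) = point hw := by
  obtain ⟨w, s, hw, hφw⟩ := exists_eq_point (φ (mtPoint h))
  obtain rfl : s = t := (congrArg d.gauge hφw).symm.trans (hgauge _)
  exact ⟨w, hw, hφw⟩

-- The image under `φ` of the vertical segment over `x` is connected.
theorem mergedAt_of_apply_mtPoint_eq (hφ : Continuous φ)
    (hgauge : ∀ P, d.gauge (φ P) = mtGauge f P) {x : X} {s t : ℝ} {v w : Fin d.n} (hst : s ≤ t)
    {hs : f x ≤ s} {ht : f x ≤ t} {hv : (v, s) ∈ d.Carrier} {hw : (w, t) ∈ d.Carrier}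
    (hφv : φ (mtPoint hs) = point hv) (hφw : φ (mtPoint ht) = point hw) : d.MergedAt t v w := by
  let segment (r : Icc s t) : d.Space := φ (mtPoint (hs.trans r.2.1))
  have hsegment : Continuous segment :=
    hφ.comp (continuous_quot_mk.comp (by fun_prop :
      Continuous fun r : Icc s t => (⟨(x, r), hs.trans r.2.1⟩ : epi f)))
  have : PreconnectedSpace (Icc s t) := Subtype.preconnectedSpace isPreconnected_Icc
  refine mergedAt_of_isPreconnected (isPreconnected_range hsegment) ?_
    ⟨⟨s, le_rfl, hst⟩, hφv⟩ ⟨⟨t, hst, le_rfl⟩, hφw⟩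
  rintro _ ⟨r, rfl⟩
  exact (hgauge _).trans_le r.2.2

theorem mem_sublevelComponent_iff_mergedAt (hφ : Continuous φ) (hinj : Injective φ)
    (hgauge : ∀ P, d.gauge (φ P) = mtGauge f P) {x y : X} {r s t : ℝ} {v w : Fin d.n}
    (hrt : r ≤ t) (hst : s ≤ t) {hx : f x ≤ r} {hy : f y ≤ s} {hv : (v, r) ∈ d.Carrier}
    {hw : (w, s) ∈ d.Carrier} (hφx : φ (mtPoint hx) = point hv)
    (hφy : φ (mtPoint hy) = point hw) : x ∈ sublevelComponent f t y ↔ d.MergedAt t v w := by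
  obtain ⟨v', hv', hφx'⟩ := exists_apply_mtPoint_eq hgauge (hx.trans hrt)
  obtain ⟨w', hw', hφy'⟩ := exists_apply_mtPoint_eq hgauge (hy.trans hst)
  have hvv' : d.MergedAt t v v' := mergedAt_of_apply_mtPoint_eq hφ hgauge hrt hφx hφx'
  have hww' : d.MergedAt t w w' := mergedAt_of_apply_mtPoint_eq hφ hgauge hst hφy hφy'
  rw [← mtPoint_eq_mtPoint_iff (hx := hx.trans hrt) (hy := hy.trans hst), ← hinj.eq_iff, hφx',
    hφy', point_eq_point_iff]
  exact ⟨fun h => hvv'.trans (h.trans hww'.symm), fun h => hvv'.symm.trans (h.trans hww')⟩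

theorem exists_realizesLeaves_of_gaugedIso (h : GaugedIso (mtGauge f) d.gauge) :
    ∃ x, RealizesLeaves d f x := by
  obtain ⟨φ, hgauge⟩ := h
  have hleaf (l : d.Leaf) :
      ∃ (x : X) (h : f x ≤ d.val l.1), φ (mtPoint h) = point (self_mem_carrier l.1) := by
    obtain ⟨P, hP⟩ := φ.surjective (point (self_mem_carrier l.1))
    obtain ⟨x, t, hx, rfl⟩ := exists_eq_mtPoint P
    obtain rfl : t = d.val l.1 := (hgauge _).symm.trans (congrArg d.gauge hP)
    exact ⟨x, hx, hP⟩
  choose x hle hφx using hleaf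
  have hval (l : d.Leaf) : d.val l.1 ≤ f (x l) := by
    obtain ⟨w, hw, hφw⟩ := exists_apply_mtPoint_eq hgauge (le_refl (f (x l)))
    obtain rfl := l.2.eq_of_mergedAt_val
      (mergedAt_of_apply_mtPoint_eq φ.continuous hgauge (hle l) hφw (hφx l))
    exact hw.1
  refine ⟨x, fun {l l' t} => ?_, fun {y t} hy => ?_⟩
  · by_cases ht : d.val l.1 ≤ t ∧ d.val l'.1 ≤ t
    · exact mem_sublevelComponent_iff_mergedAt φ.continuous φ.injective hgauge ht.1 ht.2
        (hφx l) (hφx l')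
    · refine iff_of_false (fun h => ht ?_) (fun ⟨v, hl, hl', hv⟩ => ht ?_)
      · exact ⟨(hval l).trans (le_of_mem_sublevelComponent h),
          (hval l').trans (le_of_mem_sublevelComponent (mem_sublevelComponent_comm.1 h))⟩
      · exact ⟨hl.val_le.trans hv, hl'.val_le.trans hv⟩
  · obtain ⟨w, hw, hφw⟩ := exists_apply_mtPoint_eq hgauge hy
    obtain ⟨l, hl⟩ := exists_leaf_desc w
    exact ⟨l, (mem_sublevelComponent_iff_mergedAt φ.continuous φ.injective hgauge
      (hl.val_le.trans hw.1) le_rfl (hφx l) hφw).2 (hl.mergedAt hw.1)⟩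

end OfGaugedIso

namespace RealizesLeaves

variable {x : d.Leaf → X} (hx : RealizesLeaves d f x) {below : Fin d.n → d.Leaf}
  (hbelow : ∀ v, d.Desc (below v).1 v)

include hx hbelow

theorem le_of_mem_carrier {v : Fin d.n} {t : ℝ} (h : (v, t) ∈ d.Carrier) :
    f (x (below v)) ≤ t :=
  (hx.map_eq _).trans_le ((hbelow v).val_le.trans h.1)

theorem mtPoint_eq_mtPoint_iff {u v : Fin d.n} {t : ℝ} {hu : (u, t) ∈ d.Carrier}
    {hv : (v, t) ∈ d.Carrier} {hxu : f (x (below u)) ≤ t} {hxv : f (x (below v)) ≤ t} :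
    mtPoint hxu = mtPoint hxv ↔ point hu = point hv := by
  have hu' : d.MergedAt t (below u).1 u := (hbelow u).mergedAt hu.1
  have hv' : d.MergedAt t (below v).1 v := (hbelow v).mergedAt hv.1
  rw [_root_.mtPoint_eq_mtPoint_iff, point_eq_point_iff, hx.mem_iff]
  exact ⟨fun h => hu'.symm.trans (h.trans hv'), fun h => hu'.trans (h.trans hv'.symm)⟩

/-- The map from `T` to the merge tree of `f` that sends the point at level `t` above a node `v`
to the point at level `t` above the point of `X` chosen for the leaf `below v`. -/
def toMergeTree : d.Space → MergeTree f :=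
  Quot.lift (fun a => mtPoint (hx.le_of_mem_carrier hbelow a.2)) fun a b h => by
    obtain ⟨⟨u, t⟩, hu⟩ := a
    obtain ⟨⟨v, s⟩, hv⟩ := b
    obtain rfl : t = s := h.1
    exact (hx.mtPoint_eq_mtPoint_iff hbelow).2 (Quot.sound h)

theorem mtGauge_toMergeTree (P : d.Space) : mtGauge f (hx.toMergeTree hbelow P) = d.gauge P := by
  obtain ⟨v, t, h, rfl⟩ := exists_eq_point P
  rfl

theorem continuous_toMergeTree : Continuous (hx.toMergeTree hbelow) := by
  refine continuous_quot_lift _ (continuous_quot_mk.comp (Continuous.subtype_mk ?_ _))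
  have hfst : Continuous fun a : d.Carrier => a.1.1 := by fun_prop
  have hsnd : Continuous fun a : d.Carrier => a.1.2 := by fun_prop
  exact ((continuous_of_discreteTopology (f := fun v => x (below v))).comp hfst).prodMk hsnd

theorem injective_toMergeTree : Injective (hx.toMergeTree hbelow) := by
  intro P Q hPQ
  have hlevel := congrArg (mtGauge f) hPQ
  simp only [mtGauge_toMergeTree] at hlevel
  obtain ⟨u, t, hu, rfl⟩ := exists_eq_point P
  obtain ⟨v, s, hv, rfl⟩ := exists_eq_point Q
  obtain rfl : t = s := hlevel
  exact (hx.mtPoint_eq_mtPoint_iff hbelow).1 hPQ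

theorem surjective_toMergeTree : Surjective (hx.toMergeTree hbelow) := by
  intro Q
  obtain ⟨y, t, hy, rfl⟩ := exists_eq_mtPoint Q
  obtain ⟨l, hl⟩ := hx.exists_mem hy
  obtain ⟨w, hlw, hw⟩ :=
    exists_desc_mem_carrier ((hx.map_eq l).symm.trans_le (le_of_mem_sublevelComponent hl))
  refine ⟨point hw, _root_.mtPoint_eq_mtPoint_iff.2 (mem_sublevelComponent_trans ?_ hl)⟩
  exact hx.mem_iff.2 (((hbelow w).mergedAt hw.1).trans (hlw.mergedAt hw.1).symm)

theorem mtPoint_mem_image_toMergeTree_iff {C : Set d.Space} {y : X} {t : ℝ} {hy : f y ≤ t} :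
    mtPoint hy ∈ hx.toMergeTree hbelow '' C ↔ ∃ v, y ∈ sublevelComponent f t (x (below v)) ∧
      ∃ h : (v, t) ∈ d.Carrier, point h ∈ C := by
  constructor
  · rintro ⟨P, hP, hPy⟩
    obtain ⟨v, s, hv, rfl⟩ := exists_eq_point P
    obtain rfl : s = t := congrArg (mtGauge f) hPy
    exact ⟨v, _root_.mtPoint_eq_mtPoint_iff.1 hPy.symm, hv, hP⟩
  · rintro ⟨v, hyv, hv, hvC⟩
    exact ⟨point hv, hvC, _root_.mtPoint_eq_mtPoint_iff.2 (mem_sublevelComponent_comm.1 hyv)⟩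

theorem isClosedMap_toMergeTree (hX : IsTreeLike X) (hf : Continuous f) :
    IsClosedMap (hx.toMergeTree hbelow) := by
  intro C hC
  let levels (v : Fin d.n) : Set ℝ := {t | ∃ h : (v, t) ∈ d.Carrier, point h ∈ C}
  have hlevels (v : Fin d.n) : IsClosed (levels v) := by
    have h := d.isClosed_carrier.isClosedMap_subtype_val _ (hC.preimage continuous_quot_mk)
    convert h.preimage (Continuous.prodMk_right v) using 1
    ext t
    simp only [mem_preimage, mem_image, Subtype.exists, exists_and_right, exists_eq_right]
    rfl
  have hpreimage : Quot.mk (mtRel f) ⁻¹' (hx.toMergeTree hbelow '' C) = Subtype.val ⁻¹'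
      ⋃ v, {p : X × ℝ | p.1 ∈ sublevelComponent f p.2 (x (below v))} ∩ Prod.snd ⁻¹' levels v := by
    ext ⟨⟨y, t⟩, hy⟩
    rw [mem_preimage (f := Subtype.val), mem_iUnion]
    exact hx.mtPoint_mem_image_toMergeTree_iff hbelow (hy := hy)
  refine isQuotientMap_quot_mk.isClosed_preimage.1 (hpreimage ▸ ?_)
  exact (isClosed_iUnion_of_finite fun v => (hX.isClosed_setOf_mem_sublevelComponent hf _).inter
    ((hlevels v).preimage continuous_snd)).preimage continuous_subtype_val

omit hbelow in
theorem gaugedIso (hX : IsTreeLike X) (hf : Continuous f) : GaugedIso (mtGauge f) d.gauge := by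
  choose below hbelow using exists_leaf_desc (d := d)
  let Φ : d.Space ≃ₜ MergeTree f :=
    (Equiv.ofBijective _ ⟨hx.injective_toMergeTree hbelow,
      hx.surjective_toMergeTree hbelow⟩).toHomeomorphOfContinuousClosed
      (hx.continuous_toMergeTree hbelow) (hx.isClosedMap_toMergeTree hbelow hX hf)
  refine ⟨Φ.symm, fun Q => ?_⟩
  rw [← hx.mtGauge_toMergeTree hbelow]
  exact congrArg (mtGauge f) (Φ.apply_symm_apply Q)

end RealizesLeaves

theorem gaugedIso_iff_exists_realizesLeaves (hX : IsTreeLike X) (hf : Continuous f) :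
    GaugedIso (mtGauge f) d.gauge ↔ ∃ x, RealizesLeaves d f x :=
  ⟨exists_realizesLeaves_of_gaugedIso, fun ⟨_, hx⟩ => hx.gaugedIso hX hf⟩

end MergeTreeOfFunction

section LocalMinima

open Function Set

variable {X : Type*} [TopologicalSpace X] {f : X → ℝ} {d : MergeTreeData}

theorem IsTreeLike.forall_isGreatest_image_range_iff (hX : IsTreeLike X) (hf : Continuous f)
    {M N : Set X} (hM : IsLocMin f M) (hN : IsLocMin f N) (hMN : M ≠ N) {x y : X} (hx : x ∈ M)
    (hy : y ∈ N) {c : ℝ} :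
    (∀ (p q : X) (γ : Path p q), p ∈ M → q ∈ N → Injective γ → range γ ∩ M = {p} →
      range γ ∩ N = {q} → IsGreatest (f '' range γ) c) ↔
      ∀ t, x ∈ sublevelComponent f t y ↔ c ≤ t := by
  have hmove {p q : X} (hp : p ∈ M) (hq : q ∈ N) (t : ℝ) :
      x ∈ sublevelComponent f t y ↔ p ∈ sublevelComponent f t q := by
    rw [hM.mem_sublevelComponent_iff hx hp, mem_sublevelComponent_comm,
      hN.mem_sublevelComponent_iff hy hq, mem_sublevelComponent_comm]
  constructor
  · intro h t
    have hdisj : Disjoint M N :=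
      disjoint_left.2 fun z hzM hzN => hMN (hM.eq_of_mem_of_mem hN hzM hzN)
    obtain ⟨p, q, γ, hp, hq, hγ, hpM, hqN⟩ := exists_injective_path_range_inter_eq_singleton
      (hM.isClosed hf) (hN.isClosed hf) hdisj hx hy (hX.joinedByArc x y)
    rw [hmove hp hq, (hX.isGreatest_image_range_iff hf hγ).1 (h p q γ hp hq hγ hpM hqN)]
  · intro h p q γ hp hq hγ _ _
    exact (hX.isGreatest_image_range_iff hf hγ).2 fun t => (hmove hp hq t).symm.trans (h t)

namespace RealizesLeaves

variable {x : d.Leaf → X}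

theorem eq_of_mem_sublevelComponent (hx : RealizesLeaves d f x) {l l' : d.Leaf}
    (h : x l ∈ sublevelComponent f (f (x l')) (x l')) : l = l' := by
  rw [hx.mem_iff, hx.map_eq] at h
  exact Subtype.ext (l'.2.eq_of_mergedAt_val h)

theorem isLocMin (hx : RealizesLeaves d f x) (l : d.Leaf) :
    IsLocMin f (sublevelComponent f (f (x l)) (x l)) := by
  refine isLocMin_sublevelComponent fun y hy => ?_
  obtain ⟨l', hl'⟩ := hx.exists_mem (le_refl (f y))
  have hmem : x l' ∈ sublevelComponent f (f (x l)) (x l) :=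
    mem_sublevelComponent_trans (sublevelComponent_mono (le_of_mem_sublevelComponent hy) y hl') hy
  obtain rfl := hx.eq_of_mem_sublevelComponent hmem
  exact le_of_mem_sublevelComponent hl'

theorem bijective_isLocMin (hx : RealizesLeaves d f x) :
    Bijective fun l => (⟨_, hx.isLocMin l⟩ : {M // IsLocMin f M}) := by
  have hself (l : d.Leaf) : x l ∈ sublevelComponent f (f (x l)) (x l) :=
    mem_sublevelComponent_self.2 le_rfl
  constructor
  · intro l l' h
    exact hx.eq_of_mem_sublevelComponent ((congrArg Subtype.val h).subset (hself l))
  · rintro ⟨M, hM⟩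
    obtain ⟨y, hy⟩ := hM.1.nonempty
    obtain ⟨l, hl⟩ := hx.exists_mem (le_refl (f y))
    rw [← hM.eq_sublevelComponent hy] at hl
    exact ⟨l, Subtype.ext ((hx.isLocMin l).eq_of_mem_of_mem hM (hself l) hl)⟩

/-- The correspondence between the leaves of `T` and the local minima of `f` that sends a leaf
to the local minimum through its chosen point. -/
def equivLocMin (hx : RealizesLeaves d f x) : d.Leaf ≃ {M : Set X // IsLocMin f M} :=
  Equiv.ofBijective _ hx.bijective_isLocMin

theorem mem_equivLocMin (hx : RealizesLeaves d f x) (l : d.Leaf) : x l ∈ (hx.equivLocMin l).1 :=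
  mem_sublevelComponent_self.2 le_rfl

end RealizesLeaves

theorem realizesLeaves_of_mem_isLocMin [CompactSpace X] (hf : Continuous f)
    (e : d.Leaf ≃ {M : Set X // IsLocMin f M}) {x : d.Leaf → X} (hx : ∀ l, x l ∈ (e l).1)
    (hval : ∀ l, f (x l) = d.val l.1)
    (hmem : ∀ l l', l ≠ l' → ∀ a, d.IsLCA l.1 l'.1 a →
      ∀ t, x l ∈ sublevelComponent f t (x l') ↔ d.val a ≤ t) : RealizesLeaves d f x where
  mem_iff {l l' t} := by
    rcases eq_or_ne l l' with rfl | hne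
    · rw [mem_sublevelComponent_self, MergeTreeData.mergedAt_self, hval]
    · obtain ⟨a, ha⟩ := MergeTreeData.exists_isLCA l.1 l'.1
      rw [hmem l l' hne a ha, ha.mergedAt_iff]
  exists_mem {y t} hy := by
    obtain ⟨M, hM, hsub⟩ := exists_isLocMin_subset_sublevelComponent hf hy
    obtain ⟨l, hl⟩ := e.surjective ⟨M, hM⟩
    exact ⟨l, hsub ((congrArg Subtype.val hl).subset (hx l))⟩

end LocalMinima

theorem stmt15_general {X : Type*} [TopologicalSpace X] [CompactSpace X] (hX : IsTreeLike X)
    (d : MergeTreeData) (f : X → ℝ) (hf : Continuous f) :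
    GaugedIso (mtGauge f) d.gauge ↔
      ∃ e : d.Leaf ≃ {M : Set X // IsLocMin f M},
        (∀ l : d.Leaf, ∀ x ∈ (e l).1, f x = d.val l.1) ∧
        (∀ l l' : d.Leaf, l ≠ l' → ∀ a : Fin d.n, d.IsLCA l.1 l'.1 a →
          ∀ (p q : X) (γ : Path p q), p ∈ (e l).1 → q ∈ (e l').1 →
            Function.Injective γ →
            Set.range γ ∩ (e l).1 = {p} → Set.range γ ∩ (e l').1 = {q} →
            IsGreatest (f '' Set.range γ) (d.val a)) := by
  have hpath (e : d.Leaf ≃ {M : Set X // IsLocMin f M}) {l l' : d.Leaf} (h : l ≠ l') {x y : X}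
      (hx : x ∈ (e l).1) (hy : y ∈ (e l').1) (c : ℝ) :=
    hX.forall_isGreatest_image_range_iff hf (e l).2 (e l').2
      (Subtype.coe_ne_coe.2 (e.injective.ne h)) hx hy (c := c)
  rw [gaugedIso_iff_exists_realizesLeaves hX hf]
  constructor
  · rintro ⟨x, hx⟩
    have hxe := hx.mem_equivLocMin
    refine ⟨hx.equivLocMin, fun l y hy => ?_, fun l l' hne a ha => ?_⟩
    · rw [(hx.equivLocMin l).2.eq_of_mem hy (hxe l), hx.map_eq]
    · exact (hpath _ hne (hxe l) (hxe l') _).2 fun t => hx.mem_iff.trans ha.mergedAt_iff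
  · rintro ⟨e, hval, hgreatest⟩
    choose x hx using fun l => (e l).2.1.nonempty
    exact ⟨x, realizesLeaves_of_mem_isLocMin hf e hx (fun l => hval l _ (hx l))
      fun l l' hne a ha => (hpath e hne (hx l) (hx l') _).1 (hgreatest l l' hne a ha)⟩

/-- Characterization of functions on a geometric tree with a given generic cellular merge
tree `T` (given by data `d`): `MT(f) ≅ T` iff there is a correspondence `e` between the
leaves of `T` and the local minima of `f` such that (1) the local minimum corresponding to a
leaf has the leaf's value, and (2) for distinct leaves `l, l'`, the maximum of `f` over the
shortest path between the corresponding local minima is attained and equals the value of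
`LCA(l,l')`. -/
theorem stmt15 {V : Type} [Fintype V] (G : SimpleGraph V)
    (hconn : G.Connected) (hacyc : G.IsAcyclic)
    (d : MergeTreeData) (hgen : d.Generic)
    (f : TreeSpace G → ℝ) (hf : Continuous f)
    (hmin : {M : Set (TreeSpace G) | IsLocMin f M}.Finite) :
    GaugedIso (mtGauge f) d.gauge ↔
      ∃ e : d.Leaf ≃ {M : Set (TreeSpace G) // IsLocMin f M},
        (∀ l : d.Leaf, ∀ x ∈ (e l).1, f x = d.val l.1) ∧
        (∀ l l' : d.Leaf, l ≠ l' → ∀ a : Fin d.n, d.IsLCA l.1 l'.1 a →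
          ∀ (p q : TreeSpace G) (γ : Path p q), p ∈ (e l).1 → q ∈ (e l').1 →
            Function.Injective γ →
            Set.range γ ∩ (e l).1 = {p} → Set.range γ ∩ (e l').1 = {q} →
            IsGreatest (f '' Set.range γ) (d.val a)) := by
  have : CompactSpace (TreeSpace G) := TreeSpace.compactSpace
  exact stmt15_general (TreeSpace.isTreeLike hconn hacyc) d f hf
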